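/- Let τ be a first-order language and T a model-complete τ-theory. Suppose given, for each existential τ-formula ψ(x⃗), a universal τ-formula θ_ψ(x⃗) in the same free variables such that T ⊨ ∀x⃗ (ψ(x⃗) ↔ θ_ψ(x⃗)). Then T is axiomatized by T_∀ together with the Π₂ sentences AX_ψ := ∀x⃗ (ψ(x⃗) ↔ θ_ψ(x⃗)) as ψ ranges over the existential τ-formulas: a τ-structure models T if and only if it models T_∀ and all the sentences AX_ψ. -/

import Mathlib

open FirstOrder FirstOrder.Language

universe u v

namespace ModelCompanionship

variable {L : FirstOrder.Language.{u, v}}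

/-- Iterated existential quantification over the last `k` bound variables. -/
def exsN {α : Type*} : ∀ {n k : ℕ}, L.BoundedFormula α (n + k) → L.BoundedFormula α n
  | _, 0, φ => φ
  | _, _ + 1, φ => exsN φ.ex

/-- A sentence is universal (Π₁) if it is the universal closure of a
quantifier-free formula. -/
def IsUniversalSentence (φ : L.Sentence) : Prop :=
  ∃ (n : ℕ) (ψ : L.BoundedFormula Empty n), ψ.IsQF ∧ φ = ψ.alls

/-- A sentence is Π₂ if it is of the form `∀ x⃗ ∃ y⃗ φ` with `φ` quantifier-free. -/
def IsPi2Sentence (φ : L.Sentence) : Prop :=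
  ∃ (m k : ℕ) (ψ : L.BoundedFormula Empty (m + k)), ψ.IsQF ∧ φ = (exsN ψ).alls

/-- A formula is existential if it is the existential closure of a
quantifier-free formula. -/
def IsExistentialFormula {α : Type*} (φ : L.Formula α) : Prop :=
  ∃ (n : ℕ) (ψ : L.BoundedFormula α n), ψ.IsQF ∧ φ = ψ.exs

/-- A formula is universal if it is the universal closure of a
quantifier-free formula. -/
def IsUniversalFormula {α : Type*} (φ : L.Formula α) : Prop :=
  ∃ (n : ℕ) (ψ : L.BoundedFormula α n), ψ.IsQF ∧ φ = ψ.alls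

/-- A bundled nonempty `L`-structure (with domain in universe `max u v`). -/
structure BStruc (L : FirstOrder.Language.{u, v}) where
  carrier : Type (max u v)
  [str : L.Structure carrier]
  [nonempty' : Nonempty carrier]

instance (N : BStruc L) : L.Structure N.carrier := N.str

instance (N : BStruc L) : Nonempty N.carrier := N.nonempty'

/-- `φ` is a semantic consequence of `T`: it holds in every (nonempty) model of `T`. -/
def Consequence (T : L.Theory) (φ : L.Sentence) : Prop :=
  ∀ M : BStruc L, M.carrier ⊨ T → M.carrier ⊨ φ

/-- A formula with free variables is a semantic consequence of `T` if its universal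
closure holds in every (nonempty) model of `T`. -/
def FormulaConsequence {α : Type*} (T : L.Theory) (φ : L.Formula α) : Prop :=
  ∀ M : BStruc L, M.carrier ⊨ T → ∀ v : α → M.carrier, φ.Realize v

/-- `T_∀`: the set of universal sentences which are consequences of `T`. -/
def univConsequences (T : L.Theory) : L.Theory :=
  {φ | IsUniversalSentence φ ∧ Consequence T φ}

/-- A theory is complete if it is satisfiable and decides every sentence. -/
def IsCompleteTheory (T : L.Theory) : Prop :=
  T.IsSatisfiable ∧ ∀ φ : L.Sentence, Consequence T φ ∨ Consequence T φ.not

/-- A theory is Π₁-complete if it is satisfiable and decides every universal sentence. -/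
def Pi1Complete (T : L.Theory) : Prop :=
  T.IsSatisfiable ∧ ∀ φ : L.Sentence, IsUniversalSentence φ →
    (Consequence T φ ∨ Consequence T φ.not)

/-- An embedding is Σ₁-elementary (`M ≺₁ N`) if it reflects existential formulas
with parameters in the domain. -/
def Sigma1Elementary {M : Type*} {N : Type*} [L.Structure M] [L.Structure N]
    (j : M ↪[L] N) : Prop :=
  ∀ (n : ℕ) (φ : L.Formula (Fin n)), IsExistentialFormula φ →
    ∀ a : Fin n → M, φ.Realize (fun i => j (a i)) → φ.Realize a

/-- An embedding is elementary if it preserves and reflects all first-order formulas. -/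
def ElementaryEmb {M : Type*} {N : Type*} [L.Structure M] [L.Structure N]
    (j : M ↪[L] N) : Prop :=
  ∀ (n : ℕ) (φ : L.Formula (Fin n)) (a : Fin n → M),
    φ.Realize (fun i => j (a i)) ↔ φ.Realize a

/-- `M` is `T`-existentially closed: it embeds into a model of `T` and every
embedding of `M` into a model of `T` is Σ₁-elementary. -/
def IsEC (T : L.Theory) (M : Type*) [L.Structure M] : Prop :=
  (∃ N : BStruc L, N.carrier ⊨ T ∧ Nonempty (M ↪[L] N.carrier)) ∧
  ∀ N : BStruc L, N.carrier ⊨ T → ∀ j : M ↪[L] N.carrier, Sigma1Elementary j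

/-- A theory is model complete if every embedding between its models is elementary. -/
def ModelComplete (T : L.Theory) : Prop :=
  ∀ M N : BStruc L, M.carrier ⊨ T → N.carrier ⊨ T →
    ∀ j : M.carrier ↪[L] N.carrier, ElementaryEmb j

/-- `Tstar` is the model companion of `T`. -/
def IsModelCompanion (T Tstar : L.Theory) : Prop :=
  (∀ M : BStruc L, M.carrier ⊨ T →
    ∃ N : BStruc L, N.carrier ⊨ Tstar ∧ Nonempty (M.carrier ↪[L] N.carrier)) ∧
  (∀ M : BStruc L, M.carrier ⊨ Tstar →
    ∃ N : BStruc L, N.carrier ⊨ T ∧ Nonempty (M.carrier ↪[L] N.carrier)) ∧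
  ModelComplete Tstar

theorem isQF_toFormula {α : Type*} {n : ℕ} {φ : L.BoundedFormula α n} (h : φ.IsQF) :
    φ.toFormula.IsQF := by
  induction h with
  | falsum => exact BoundedFormula.IsQF.falsum
  | of_isAtomic h =>
    cases h with
    | equal t₁ t₂ => exact (BoundedFormula.IsAtomic.equal _ _).isQF
    | rel R ts => exact (BoundedFormula.IsAtomic.rel _ _).isQF
  | imp _ _ ih1 ih2 => exact ih1.imp ih2

/-- `K` satisfies all the axioms `AX_ψ`. -/
def SatAX (θ : ∀ n : ℕ, L.Formula (Fin n) → L.Formula (Fin n)) (K : BStruc L) : Prop :=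
  ∀ (n : ℕ) (ψ : L.Formula (Fin n)), IsExistentialFormula ψ →
    ∀ a : Fin n → K.carrier, (ψ.iff (θ n ψ)).Realize a

/-- `φ` is equivalent to a universal formula modulo the axioms `AX_ψ`. -/
def UnivEquiv (θ : ∀ n : ℕ, L.Formula (Fin n) → L.Formula (Fin n)) {n : ℕ}
    (φ : L.BoundedFormula Empty n) : Prop :=
  ∃ χ : L.Formula (Fin n), IsUniversalFormula χ ∧
    ∀ K : BStruc L, SatAX θ K → ∀ xs : Fin n → K.carrier,
      (φ.Realize default xs ↔ χ.Realize xs)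

theorem univEquiv_of_isQF (θ : ∀ n : ℕ, L.Formula (Fin n) → L.Formula (Fin n)) {n : ℕ}
    {φ : L.BoundedFormula Empty n} (h : φ.IsQF) : UnivEquiv θ φ := by
  refine ⟨φ.toFormula.relabel (Sum.elim Empty.elim id), ⟨0, _, ?_, rfl⟩, ?_⟩
  · exact (isQF_toFormula h).relabel _
  · intro K _ xs
    rw [Formula.realize_relabel, BoundedFormula.realize_toFormula,
      Subsingleton.elim ((xs ∘ Sum.elim Empty.elim id) ∘ Sum.inl) default]
    rfl

theorem UnivEquiv.not' (θ : ∀ n : ℕ, L.Formula (Fin n) → L.Formula (Fin n))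
    (hθ : ∀ (n : ℕ) (ψ : L.Formula (Fin n)), IsExistentialFormula ψ →
      IsUniversalFormula (θ n ψ)) {n : ℕ}
    {φ : L.BoundedFormula Empty n} (h : UnivEquiv θ φ) : UnivEquiv θ φ.not := by
  obtain ⟨χ, ⟨k, ψ, hψ, rfl⟩, hχ⟩ := h
  have hex : IsExistentialFormula ψ.not.exs := ⟨k, ψ.not, hψ.not, rfl⟩
  refine ⟨θ n ψ.not.exs, hθ n _ hex, ?_⟩
  intro K hK xs
  have h1 := hK n _ hex xs
  rw [Formula.realize_iff] at h1
  rw [← h1, BoundedFormula.realize_exs, BoundedFormula.realize_not, hχ K hK xs,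
    BoundedFormula.realize_alls]
  simp

theorem UnivEquiv.all' (θ : ∀ n : ℕ, L.Formula (Fin n) → L.Formula (Fin n)) {n : ℕ}
    {φ : L.BoundedFormula Empty (n + 1)} (h : UnivEquiv θ φ) : UnivEquiv θ φ.all := by
  obtain ⟨χ, ⟨k, ψ, hψ, rfl⟩, hχ⟩ := h
  let g : Fin (n + 1) → Fin n ⊕ Fin 1 := Fin.snoc (α := fun _ => Fin n ⊕ Fin 1) Sum.inl (Sum.inr 0)
  refine ⟨(ψ.relabel g).alls, ⟨_, _, hψ.relabel g, rfl⟩, ?_⟩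
  intro K hK xs
  have key : ∀ (ys : Fin 1 → K.carrier), Sum.elim xs ys ∘ g = Fin.snoc xs (ys 0) := by
    intro ys
    funext i
    refine Fin.lastCases ?_ (fun i => ?_) i <;> simp [g]
  rw [BoundedFormula.realize_all, BoundedFormula.realize_alls]
  constructor
  · intro h zs
    rw [BoundedFormula.realize_relabel, key]
    exact (BoundedFormula.realize_alls.1 ((hχ K hK _).1 (h _))) _
  · intro h a
    rw [hχ K hK, BoundedFormula.realize_alls]
    intro ys
    have := h (Fin.append (fun _ => a) ys)
    rw [BoundedFormula.realize_relabel, key] at this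
    convert this using 1
    · simp [Function.comp_def, Fin.append_left]
    · funext i
      simp [Function.comp_def, Fin.append_right]

theorem univEquiv_all (θ : ∀ n : ℕ, L.Formula (Fin n) → L.Formula (Fin n))
    (hθ : ∀ (n : ℕ) (ψ : L.Formula (Fin n)), IsExistentialFormula ψ →
      IsUniversalFormula (θ n ψ)) {n : ℕ} (φ : L.BoundedFormula Empty n) :
    UnivEquiv θ φ := by
  have h : UnivEquiv θ φ.toPrenex :=
    φ.toPrenex_isPrenex.induction_on_all_not (P := fun {n} φ => UnivEquiv θ φ)
      (fun h => univEquiv_of_isQF θ h) (fun h => h.all') (fun h => UnivEquiv.not' θ hθ h)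
  obtain ⟨χ, hχ, H⟩ := h
  refine ⟨χ, hχ, fun K hK xs => ?_⟩
  rw [← H K hK xs, BoundedFormula.realize_toPrenex]

theorem realize_congr_freeVar {α : Type*} [DecidableEq α] {K : Type*} [L.Structure K]
    (δ : L.Formula α) {v w : α → K} (h : ∀ a ∈ δ.freeVarFinset, v a = w a) :
    δ.Realize v ↔ δ.Realize w := by
  have h1 := BoundedFormula.realize_restrictFreeVar (φ := δ) (f := id)
    (v := fun a => v a) (xs := (default : Fin 0 → K)) v (fun _ => rfl)
  have h2 := BoundedFormula.realize_restrictFreeVar (φ := δ) (f := id)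
    (v := fun a => v a) (xs := (default : Fin 0 → K)) w (fun a => h a a.2)
  exact h1.symm.trans h2

/-- A quantifier-free formula satisfied in `M ⊨ T_∀` is satisfiable in a model of `T`. -/
theorem exists_model_realize (T : L.Theory) (M : BStruc L)
    (hM : M.carrier ⊨ univConsequences T) (δ : L.Formula M.carrier) (hδ : δ.IsQF)
    (hr : δ.Realize id) :
    ∃ K : BStruc L, K.carrier ⊨ T ∧ ∃ c : M.carrier → K.carrier, δ.Realize c := by
  classical
  by_contra hcon
  push Not at hcon
  let s := δ.freeVarFinset
  let e := s.equivFin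
  let g : M.carrier → Fin (s.card + 1) := fun m =>
    if h : m ∈ s then (e ⟨m, h⟩).castSucc else Fin.last _
  let b : Fin (s.card + 1) → M.carrier :=
    Fin.snoc (α := fun _ => M.carrier) (fun i => (e.symm i : M.carrier)) (Classical.arbitrary _)
  have hbg : ∀ m ∈ s, b (g m) = m := by
    intro m hm
    simp [b, g, hm]
  let χ : L.BoundedFormula Empty (s.card + 1 + 0) :=
    BoundedFormula.relabel (fun m => Sum.inr (g m)) δ.not
  have hχ : ∀ (K : BStruc L) (xs : Fin (s.card + 1) → K.carrier),
      χ.Realize default xs ↔ ¬ δ.Realize (xs ∘ g) := by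
    intro K xs
    simp only [χ]
    rw [BoundedFormula.realize_relabel, BoundedFormula.realize_not, Formula.Realize]
    refine not_congr (iff_of_eq ?_)
    exact congr rfl (Subsingleton.elim _ _)
  have hmem : χ.alls ∈ univConsequences T := by
    refine ⟨⟨_, χ, hδ.not.relabel _, rfl⟩, fun K hK => ?_⟩
    refine BoundedFormula.realize_alls.2 fun xs => ?_
    exact (hχ K xs).2 (hcon K hK _)
  have := BoundedFormula.realize_alls.1 (hM.realize_of_mem _ hmem) b
  refine (hχ M b).1 this ?_
  exact (realize_congr_freeVar δ (fun a ha => hbg a ha)).2 hr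

/-- The quantifier-free diagram of `M`. -/
def qfDiag (M : BStruc L) : (L[[M.carrier]]).Theory :=
  {σ | ∃ δ : L.Formula M.carrier, δ.IsQF ∧ δ.Realize id ∧ σ = Formula.equivSentence δ}

theorem exists_conj (M : BStruc L) (T' : (L[[M.carrier]]).Theory)
    (T0 : Finset (L[[M.carrier]]).Sentence) (h : (T0 : Set _) ⊆ T' ∪ qfDiag M) :
    ∃ δ : L.Formula M.carrier, δ.IsQF ∧ δ.Realize id ∧
      ∀ (K : BStruc L) (c : M.carrier → K.carrier), δ.Realize c →
        ∀ σ ∈ T0, σ ∈ T' ∨ (Formula.equivSentence.symm σ).Realize c := by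
  classical
  induction T0 using Finset.induction_on with
  | empty => exact ⟨⊤, BoundedFormula.IsQF.top, by simp [Formula.Realize], by simp⟩
  | insert σ T0 _ ih =>
    obtain ⟨δ, h1, h2, h3⟩ := ih (fun x hx => h (by simp at hx ⊢; exact Or.inr hx))
    rcases h (show σ ∈ _ by simp) with hσ | ⟨ε, e1, e2, rfl⟩
    · refine ⟨δ, h1, h2, fun K c hc τ hτ => ?_⟩
      rcases Finset.mem_insert.1 hτ with rfl | hτ
      · exact Or.inl hσ
      · exact h3 K c hc τ hτ
    · refine ⟨δ ⊓ ε, h1.inf e1, Formula.realize_inf.2 ⟨h2, e2⟩, fun K c hc τ hτ => ?_⟩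
      obtain ⟨c1, c2⟩ := Formula.realize_inf.1 hc
      rcases Finset.mem_insert.1 hτ with rfl | hτ
      · right
        simpa using c2
      · exact h3 K c c1 τ hτ

theorem exists_embedding (T : L.Theory) (M : BStruc L)
    (hM : M.carrier ⊨ univConsequences T) :
    ∃ N : BStruc L, N.carrier ⊨ T ∧ Nonempty (M.carrier ↪[L] N.carrier) := by
  classical
  let T' := (L.lhomWithConstants M.carrier).onTheory T
  have hsat : (T' ∪ qfDiag M).IsSatisfiable := by
    rw [Theory.isSatisfiable_iff_isFinitelySatisfiable]
    intro T0 hT0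
    obtain ⟨δ, h1, h2, h3⟩ := exists_conj M T' T0 hT0
    obtain ⟨K, hK, c, hc⟩ := exists_model_realize T M hM δ h1 h2
    letI := constantsOn.structure c
    have hKT : K.carrier ⊨ T' := (LHom.onTheory_model _ T).2 hK
    have : K.carrier ⊨ (T0 : (L[[M.carrier]]).Theory) := by
      refine (Theory.model_iff _).2 fun σ hσ => ?_
      rcases h3 K c hc σ hσ with h | h
      · exact hKT.realize_of_mem _ h
      · exact (Formula.realize_equivSentence_symm K.carrier σ c).1 h
    exact Theory.Model.isSatisfiable K.carrier
  obtain ⟨N⟩ := hsat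
  letI : L.Structure N := (L.lhomWithConstants M.carrier).reduct N
  haveI : (L.lhomWithConstants M.carrier).IsExpansionOn N := LHom.isExpansionOn_reduct _ _
  have hNT' : N ⊨ T' := Theory.Model.mono N.is_model Set.subset_union_left
  have hNT : N ⊨ T := (LHom.onTheory_model (L.lhomWithConstants M.carrier) T).1 hNT'
  let f : M.carrier → N := fun a => (L.con a : N)
  have hf : ∀ δ : L.Formula M.carrier, δ.IsQF → δ.Realize id → δ.Realize f := by
    intro δ h1 h2
    have : N ⊨ Formula.equivSentence δ :=
      N.is_model.realize_of_mem _ (Or.inr ⟨δ, h1, h2, rfl⟩)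
    exact (Formula.realize_equivSentence N δ).1 this
  refine ⟨⟨N⟩, hNT, ⟨⟨⟨f, ?_⟩, ?_, ?_⟩⟩⟩
  · intro a b hab
    by_contra hne
    have := hf (Term.equal (Term.var a) (Term.var b)).not
      (BoundedFormula.IsAtomic.equal _ _).isQF.not
      (by rw [Formula.realize_not, Formula.realize_equal]; simpa using hne)
    rw [Formula.realize_not, Formula.realize_equal] at this
    exact this (by simpa using hab)
  · intro n F x
    have := hf (Term.equal (Term.func F fun i => Term.var (x i))
        (Term.var (Structure.funMap F x)))
      (BoundedFormula.IsAtomic.equal _ _).isQF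
      (by rw [Formula.realize_equal]; simp)
    rw [Formula.realize_equal] at this
    simpa [Function.comp_def] using this.symm
  · intro n R x
    constructor
    · intro hx
      by_contra hne
      have := hf (R.formula fun i => Term.var (x i)).not
        (BoundedFormula.IsAtomic.rel _ _).isQF.not
        (by rw [Formula.realize_not, Formula.realize_rel]; simpa using hne)
      rw [Formula.realize_not, Formula.realize_rel] at this
      exact this hx
    · intro hx
      have := hf (R.formula fun i => Term.var (x i))
        (BoundedFormula.IsAtomic.rel _ _).isQF
        (by rw [Formula.realize_rel]; simpa using hx)
      rw [Formula.realize_rel] at this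
      exact this

theorem IsUniversalFormula.descend {α : Type*} {χ : L.Formula α} (h : IsUniversalFormula χ)
    {M N : Type*} [L.Structure M] [L.Structure N] (j : M ↪[L] N) {v : α → M}
    (hr : χ.Realize (j ∘ v)) : χ.Realize v := by
  obtain ⟨n, ψ, hψ, rfl⟩ := h
  rw [BoundedFormula.realize_alls] at hr ⊢
  exact fun xs => (hψ.realize_embedding j).1 (hr (j ∘ xs))

/-- A model-complete theory `T` is axiomatized by `T_∀` together with the Π₂ sentences
`AX_ψ := ∀ x⃗ (ψ(x⃗) ↔ θ_ψ(x⃗))` for `ψ` existential and `θ_ψ` a `T`-equivalent universal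
formula. -/
theorem modelComplete_axiomatization (T : L.Theory) (hT : ModelComplete T)
    (θ : ∀ n : ℕ, L.Formula (Fin n) → L.Formula (Fin n))
    (hθ : ∀ (n : ℕ) (ψ : L.Formula (Fin n)), IsExistentialFormula ψ →
      IsUniversalFormula (θ n ψ) ∧ FormulaConsequence T (ψ.iff (θ n ψ))) :
    ∀ M : BStruc L,
      (M.carrier ⊨ T ↔
        (M.carrier ⊨ univConsequences T ∧
          ∀ (n : ℕ) (ψ : L.Formula (Fin n)), IsExistentialFormula ψ →
            ∀ a : Fin n → M.carrier, (ψ.iff (θ n ψ)).Realize a)) := by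
  intro M
  constructor
  · intro hM
    exact ⟨(Theory.model_iff _).2 fun φ hφ => hφ.2 M hM,
      fun n ψ hψ a => (hθ n ψ hψ).2 M hM a⟩
  · rintro ⟨hM, hAX⟩
    obtain ⟨N, hN, ⟨j⟩⟩ := exists_embedding T M hM
    have hNAX : SatAX θ N := fun n ψ hψ a => (hθ n ψ hψ).2 N hN a
    refine (Theory.model_iff _).2 fun φ hφ => ?_
    obtain ⟨χ, hχ, H⟩ := univEquiv_all θ (fun n ψ hψ => (hθ n ψ hψ).1) φ
    have h1 : χ.Realize (j ∘ (default : Fin 0 → M.carrier)) := by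
      rw [← H N hNAX, Subsingleton.elim (j ∘ (default : Fin 0 → M.carrier)) default]
      exact hN.realize_of_mem _ hφ
    exact (H M hAX default).2 (hχ.descend j h1)

end ModelCompanionship
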